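/- (Theorem 4.3) If M is minimal (H ≡ 0 on U) and has no parabolic points, then every parallel surface x* = x + ρ n of M (ρ ≠ 0, 1 + ρ²K ≠ 0 on U) is of null III-type 2 with respect to the common third fundamental form: x* = x + (ρ n) where Δ^{III} x = 0, Δ^{III}(ρ n) = 2(ρ n), both summands are nonconstant, and x* is not of null III-type 1, i.e. Δ^{III} x* ≠ 0 (equivalently, x* is not minimal). -/

import Mathlib

open Matrix

noncomputable section

/-- The parameter domain `ℝ²`. -/
abbrev Param : Type := Fin 2 → ℝ

/-- Vectors in Euclidean 3-space. -/
abbrev Vec3 : Type := Fin 3 → ℝ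

/-- Partial derivative of a vector-valued function in the `i`-th coordinate direction. -/
noncomputable def pd (i : Fin 2) (f : Param → Vec3) (u : Param) : Vec3 :=
  fderiv ℝ f u (Pi.single i 1)

/-- Partial derivative of a scalar function in the `i`-th coordinate direction. -/
noncomputable def pds (i : Fin 2) (f : Param → ℝ) (u : Param) : ℝ :=
  fderiv ℝ f u (Pi.single i 1)

/-- The Euclidean inner product on `ℝ³`. -/
def dot3 (a b : Vec3) : ℝ := ∑ k, a k * b k

/-- The Euclidean norm on `ℝ³`. -/
noncomputable def norm3 (a : Vec3) : ℝ := Real.sqrt (dot3 a a)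

/-- The Gauss map `n = (x_{/1} × x_{/2}) / ‖x_{/1} × x_{/2}‖`. -/
noncomputable def gaussMap (x : Param → Vec3) (u : Param) : Vec3 :=
  (norm3 (crossProduct (pd 0 x u) (pd 1 x u)))⁻¹ • crossProduct (pd 0 x u) (pd 1 x u)

/-- Components `g_{ij}` of the first fundamental form. -/
noncomputable def fformI (x : Param → Vec3) (u : Param) : Matrix (Fin 2) (Fin 2) ℝ :=
  Matrix.of fun i j => dot3 (pd i x u) (pd j x u)

/-- Components `b_{ij} = ⟨∂²x/∂u^i∂u^j, n⟩` of the second fundamental form. -/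
noncomputable def fformII (x : Param → Vec3) (u : Param) : Matrix (Fin 2) (Fin 2) ℝ :=
  Matrix.of fun i j => dot3 (pd i (pd j x) u) (gaussMap x u)

/-- Components `e_{ij} = ⟨n_{/i}, n_{/j}⟩` of the third fundamental form. -/
noncomputable def fformIII (x : Param → Vec3) (u : Param) : Matrix (Fin 2) (Fin 2) ℝ :=
  Matrix.of fun i j => dot3 (pd i (gaussMap x) u) (pd j (gaussMap x) u)

/-- The Gauss curvature `K = det(b_{ij}) / det(g_{ij})`. -/
noncomputable def gaussCurv (x : Param → Vec3) (u : Param) : ℝ :=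
  (fformII x u).det / (fformI x u).det

/-- The mean curvature `H = (1/2) g^{ij} b_{ij}`. -/
noncomputable def meanCurv (x : Param → Vec3) (u : Param) : ℝ :=
  (1 / 2) * ∑ i, ∑ j, (fformI x u)⁻¹ i j * fformII x u i j

/-- First Beltrami operator `∇^J(φ, ψ) = a^{ij} φ_{/i} ψ_{/j}` with respect to the
fundamental form with component matrix `a`, for scalar `φ` and `ℝ³`-valued `ψ`. -/
noncomputable def beltrami1 (a : Param → Matrix (Fin 2) (Fin 2) ℝ)
    (φ : Param → ℝ) (ψ : Param → Vec3) (u : Param) : Vec3 :=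
  ∑ i, ∑ j, ((a u)⁻¹ i j * pds i φ u) • pd j ψ u

/-- Second Beltrami operator
`Δ^J f = −(1/√|det a|) ∂_i (√|det a| a^{ij} ∂_j f)` with respect to the fundamental
form with component matrix `a`, acting componentwise on `ℝ³`-valued functions. -/
noncomputable def beltrami2 (a : Param → Matrix (Fin 2) (Fin 2) ℝ)
    (f : Param → Vec3) (u : Param) : Vec3 :=
  -((Real.sqrt |(a u).det|)⁻¹ •
    ∑ i, ∑ j, pd i (fun v => (Real.sqrt |(a v).det| * (a v)⁻¹ i j) • pd j f v) u)

/-- `x` is an immersion on `U`: the partial derivatives are linearly independent. -/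
def Immersed (x : Param → Vec3) (U : Set Param) : Prop :=
  ∀ u ∈ U, LinearIndependent ℝ ![pd 0 x u, pd 1 x u]

/-- `f` is nonconstant on `U`. -/
def NonconstOn (f : Param → Vec3) (U : Set Param) : Prop :=
  ¬ ∃ v : Vec3, ∀ u ∈ U, f u = v


lemma cross_dot_self (a b : Vec3) : dot3 (crossProduct a b) (crossProduct a b) =
    dot3 a a * dot3 b b - dot3 a b * dot3 a b := by
  simp only [dot3, cross_apply, Fin.sum_univ_three]
  simp
  ring

lemma expand_tangent (a b p : Vec3) (h : dot3 p (crossProduct a b) = 0)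
    (hD : dot3 a a * dot3 b b - dot3 a b * dot3 a b ≠ 0) :
    ∃ α β : ℝ, p = α • a + β • b := by
  refine ⟨(dot3 p a * dot3 b b - dot3 p b * dot3 a b) /
      (dot3 a a * dot3 b b - dot3 a b * dot3 a b),
    (dot3 p b * dot3 a a - dot3 p a * dot3 a b) /
      (dot3 a a * dot3 b b - dot3 a b * dot3 a b), ?_⟩
  have key : ∀ k, (dot3 a a * dot3 b b - dot3 a b * dot3 a b) * p k =
      (dot3 p a * dot3 b b - dot3 p b * dot3 a b) * a k +
      (dot3 p b * dot3 a a - dot3 p a * dot3 a b) * b k := by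
    intro k
    have : (dot3 a a * dot3 b b - dot3 a b * dot3 a b) * p k =
      (dot3 p a * dot3 b b - dot3 p b * dot3 a b) * a k +
      (dot3 p b * dot3 a a - dot3 p a * dot3 a b) * b k +
      dot3 p (crossProduct a b) * crossProduct a b k := by
      fin_cases k <;> simp [dot3, cross_apply, Fin.sum_univ_three] <;> ring
    rw [this, h]; ring
  funext k
  have := key k
  simp only [Pi.add_apply, Pi.smul_apply, smul_eq_mul]
  rw [div_mul_eq_mul_div, div_mul_eq_mul_div, ← add_div, eq_div_iff hD]
  linarith

lemma pd_apply {f : Param → Vec3} {u : Param} (hf : DifferentiableAt ℝ f u) (i : Fin 2)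
    (k : Fin 3) : pd i f u k = pds i (fun v => f v k) u := by
  unfold pd pds
  rw [fderiv_apply hf]
  rfl

lemma pds_mul {f g : Param → ℝ} {u : Param} (hf : DifferentiableAt ℝ f u)
    (hg : DifferentiableAt ℝ g u) (i : Fin 2) :
    pds i (fun v => f v * g v) u = pds i f u * g u + f u * pds i g u := by
  unfold pds
  rw [fderiv_fun_mul hf hg]
  simp; ring

lemma pds_sub {f g : Param → ℝ} {u : Param} (hf : DifferentiableAt ℝ f u)
    (hg : DifferentiableAt ℝ g u) (i : Fin 2) :
    pds i (fun v => f v - g v) u = pds i f u - pds i g u := by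
  unfold pds
  rw [fderiv_fun_sub hf hg]
  simp

lemma pds_add {f g : Param → ℝ} {u : Param} (hf : DifferentiableAt ℝ f u)
    (hg : DifferentiableAt ℝ g u) (i : Fin 2) :
    pds i (fun v => f v + g v) u = pds i f u + pds i g u := by
  unfold pds
  rw [fderiv_fun_add hf hg]
  simp

lemma pd_add {f g : Param → Vec3} {u : Param} (hf : DifferentiableAt ℝ f u)
    (hg : DifferentiableAt ℝ g u) (i : Fin 2) :
    pd i (fun v => f v + g v) u = pd i f u + pd i g u := by
  unfold pd
  rw [fderiv_fun_add hf hg]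
  simp

lemma pd_smul {f : Param → Vec3} {u : Param} (c : ℝ) (hf : DifferentiableAt ℝ f u)
    (i : Fin 2) : pd i (fun v => c • f v) u = c • pd i f u := by
  unfold pd
  rw [fderiv_fun_const_smul hf]
  simp

lemma cross_cd {f g : Param → Vec3} {U : Set Param} (hf : ContDiffOn ℝ (⊤ : ℕ∞) f U)
    (hg : ContDiffOn ℝ (⊤ : ℕ∞) g U) :
    ContDiffOn ℝ (⊤ : ℕ∞) (fun v => crossProduct (f v) (g v)) U := by
  have hf' := contDiffOn_pi.1 hf
  have hg' := contDiffOn_pi.1 hg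
  rw [contDiffOn_pi]
  intro k
  fin_cases k <;> simp only [cross_apply] <;> simp
  · exact ((hf' 1).mul (hg' 2)).sub ((hf' 2).mul (hg' 1))
  · exact ((hf' 2).mul (hg' 0)).sub ((hf' 0).mul (hg' 2))
  · exact ((hf' 0).mul (hg' 1)).sub ((hf' 1).mul (hg' 0))

lemma dot_cd {f g : Param → Vec3} {U : Set Param} (hf : ContDiffOn ℝ (⊤ : ℕ∞) f U)
    (hg : ContDiffOn ℝ (⊤ : ℕ∞) g U) :
    ContDiffOn ℝ (⊤ : ℕ∞) (fun v => dot3 (f v) (g v)) U := by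
  have hf' := contDiffOn_pi.1 hf
  have hg' := contDiffOn_pi.1 hg
  simp only [dot3]
  exact ContDiffOn.sum fun k _ => (hf' k).mul (hg' k)

lemma pd_cd {f : Param → Vec3} {U : Set Param} (hU : IsOpen U)
    (hf : ContDiffOn ℝ (⊤ : ℕ∞) f U) (i : Fin 2) :
    ContDiffOn ℝ (⊤ : ℕ∞) (pd i f) U := by
  have h := hf.fderiv_of_isOpen hU (m := (⊤ : ℕ∞)) (by simp)
  exact h.clm_apply contDiffOn_const

lemma cd_diff {E : Type*} [NormedAddCommGroup E] [NormedSpace ℝ E] {f : Param → E}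
    {U : Set Param} (hU : IsOpen U)
    (hf : ContDiffOn ℝ (⊤ : ℕ∞) f U) {u : Param} (hu : u ∈ U) : DifferentiableAt ℝ f u :=
  (hf.differentiableOn (by simp)).differentiableAt (hU.mem_nhds hu)

lemma pd_cross {f g : Param → Vec3} {u : Param} (hf : DifferentiableAt ℝ f u)
    (hg : DifferentiableAt ℝ g u) (i : Fin 2) :
    pd i (fun v => crossProduct (f v) (g v)) u =
      crossProduct (pd i f u) (g u) + crossProduct (f u) (pd i g u) := by
  have hf' := differentiableAt_pi.1 hf
  have hg' := differentiableAt_pi.1 hg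
  have hc : DifferentiableAt ℝ (fun v => crossProduct (f v) (g v)) u := by
    rw [differentiableAt_pi]
    intro k
    fin_cases k <;> simp only [cross_apply] <;> simp
    · exact ((hf' 1).mul (hg' 2)).sub ((hf' 2).mul (hg' 1))
    · exact ((hf' 2).mul (hg' 0)).sub ((hf' 0).mul (hg' 2))
    · exact ((hf' 0).mul (hg' 1)).sub ((hf' 1).mul (hg' 0))
  funext k
  rw [pd_apply hc]
  have aux : ∀ a b : Fin 3, pds i (fun v => f v a * g v b - f v b * g v a) u =
      pd i f u a * g u b + f u a * pd i g u b - (pd i f u b * g u a + f u b * pd i g u a) := by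
    intro a b
    rw [pds_sub ((hf' a).fun_mul (hg' b)) ((hf' b).fun_mul (hg' a)), pds_mul (hf' a) (hg' b),
      pds_mul (hf' b) (hg' a), pd_apply hf, pd_apply hf, pd_apply hg, pd_apply hg]
  fin_cases k <;> simp [cross_apply]
  · rw [aux 1 2]; ring
  · rw [aux 2 0]; ring
  · rw [aux 0 1]; ring

lemma pds_dot {f g : Param → Vec3} {u : Param} (hf : DifferentiableAt ℝ f u)
    (hg : DifferentiableAt ℝ g u) (i : Fin 2) :
    pds i (fun v => dot3 (f v) (g v)) u = dot3 (pd i f u) (g u) + dot3 (f u) (pd i g u) := by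
  have hf' := differentiableAt_pi.1 hf
  have hg' := differentiableAt_pi.1 hg
  simp only [dot3, Fin.sum_univ_three]
  rw [pds_add (((hf' 0).fun_mul (hg' 0)).fun_add ((hf' 1).fun_mul (hg' 1)))
      ((hf' 2).fun_mul (hg' 2)),
    pds_add ((hf' 0).fun_mul (hg' 0)) ((hf' 1).fun_mul (hg' 1)),
    pds_mul (hf' 0) (hg' 0), pds_mul (hf' 1) (hg' 1), pds_mul (hf' 2) (hg' 2)]
  simp only [pd_apply hf, pd_apply hg]
  ring

lemma pd_symm {f : Param → Vec3} {U : Set Param} (hU : IsOpen U)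
    (hf : ContDiffOn ℝ (⊤ : ℕ∞) f U) {u : Param} (hu : u ∈ U) (i j : Fin 2) :
    pd i (pd j f) u = pd j (pd i f) u := by
  have hd : DifferentiableAt ℝ (fderiv ℝ f) u :=
    cd_diff hU (hf.fderiv_of_isOpen hU (m := (⊤ : ℕ∞)) (by simp)) hu
  have aux : ∀ i j, pd i (pd j f) u =
      fderiv ℝ (fderiv ℝ f) u (Pi.single i 1) (Pi.single j 1) := by
    intro i j
    unfold pd
    rw [fderiv_clm_apply hd (differentiableAt_const _)]
    simp
  rw [aux, aux]
  have hs : IsSymmSndFDerivAt ℝ f u :=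
    (hf.contDiffAt (hU.mem_nhds hu)).isSymmSndFDerivAt
      (by simp only [minSmoothness_of_isRCLikeNormedField]; exact WithTop.coe_le_coe.2 (le_top (a := (2 : ℕ∞))))
  exact hs.eq _ _

lemma pd_congr {f g : Param → Vec3} {U : Set Param} (hU : IsOpen U)
    (h : ∀ v ∈ U, f v = g v) {u : Param} (hu : u ∈ U) (i : Fin 2) : pd i f u = pd i g u := by
  have : f =ᶠ[nhds u] g := Filter.eventually_of_mem (hU.mem_nhds hu) h
  unfold pd
  rw [this.fderiv_eq]

lemma pds_const_on {f : Param → ℝ} {c : ℝ} {U : Set Param} (hU : IsOpen U)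
    (h : ∀ v ∈ U, f v = c) {u : Param} (hu : u ∈ U) (i : Fin 2) : pds i f u = 0 := by
  have : f =ᶠ[nhds u] (fun _ => c) := Filter.eventually_of_mem (hU.mem_nhds hu) h
  unfold pds
  rw [this.fderiv_eq]
  simp

lemma pd_const_on {f : Param → Vec3} {c : Vec3} {U : Set Param} (hU : IsOpen U)
    (h : ∀ v ∈ U, f v = c) {u : Param} (hu : u ∈ U) (i : Fin 2) : pd i f u = 0 := by
  have : f =ᶠ[nhds u] (fun _ => c) := Filter.eventually_of_mem (hU.mem_nhds hu) h
  unfold pd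
  rw [this.fderiv_eq]
  simp

lemma dot3_smul_right (c : ℝ) (a b : Vec3) : dot3 a (c • b) = c * dot3 a b := by
  simp [dot3, Fin.sum_univ_three]; ring

lemma dot3_comm (a b : Vec3) : dot3 a b = dot3 b a := by
  simp [dot3, mul_comm]

lemma dot3_comb (α β : ℝ) (a b c : Vec3) :
    dot3 (α • a + β • b) c = α * dot3 a c + β * dot3 b c := by
  simp [dot3, Fin.sum_univ_three]; ring

lemma dot3_pos {a : Vec3} (h : a ≠ 0) : 0 < dot3 a a := by
  obtain ⟨k, hk⟩ := Function.ne_iff.1 h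
  unfold dot3
  exact Finset.sum_pos' (fun i _ => mul_self_nonneg _)
    ⟨k, Finset.mem_univ _, mul_self_pos.2 hk⟩

/-- Pointwise algebraic data of the moving frame. -/
structure Frame (a b n p q : Vec3) (W : ℝ) (α β γ δ : ℝ) : Prop where
  Wpos : 0 < W
  Wsq : W * W = dot3 a a * dot3 b b - dot3 a b * dot3 a b
  hc : crossProduct a b = W • n
  hn : n = W⁻¹ • crossProduct a b
  hp : p = α • a + β • b
  hq : q = γ • a + δ • b
  tr : δ = -α
  sym : α * dot3 a b + β * dot3 b b = γ * dot3 a a + δ * dot3 a b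
  nd : α * δ - β * γ ≠ 0

section
variable {a b n p q : Vec3} {W α β γ δ : ℝ} (h : Frame a b n p q W α β γ δ)

lemma Frame.e00 (h : Frame a b n p q W α β γ δ) :
    dot3 p p = (β * γ - α * δ) * dot3 a a := by
  have := h.sym
  rw [h.hp, dot3_comb, dot3_comm a, dot3_comm b, dot3_comb, dot3_comb, dot3_comm b a, h.tr]
  rw [h.tr] at this
  linear_combination β * this

lemma Frame.e11 (h : Frame a b n p q W α β γ δ) :
    dot3 q q = (β * γ - α * δ) * dot3 b b := by
  have := h.sym
  rw [h.hq, dot3_comb, dot3_comm a, dot3_comm b, dot3_comb, dot3_comb, dot3_comm b a, h.tr]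
  rw [h.tr] at this
  linear_combination (-γ) * this

lemma Frame.e01 (h : Frame a b n p q W α β γ δ) :
    dot3 p q = (β * γ - α * δ) * dot3 a b := by
  have := h.sym
  rw [h.hp, h.hq, dot3_comb, dot3_comm a, dot3_comm b, dot3_comb, dot3_comb, dot3_comm b a, h.tr]
  rw [h.tr] at this
  linear_combination (-α) * this

lemma Frame.ane (h : Frame a b n p q W α β γ δ) : 0 < dot3 a a := by
  apply dot3_pos
  rintro rfl
  have := h.Wsq
  have h2 := h.Wpos
  simp [dot3] at this
  exact h2.ne' this

lemma Frame.kpos (h : Frame a b n p q W α β γ δ) : 0 < β * γ - α * δ := by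
  have h1 : 0 ≤ dot3 p p := Finset.sum_nonneg fun i _ => mul_self_nonneg _
  rw [h.e00] at h1
  have h2 := nonneg_of_mul_nonneg_left h1 h.ane
  refine lt_of_le_of_ne h2 fun h3 => h.nd (by linarith)

lemma Frame.cross_pq (h : Frame a b n p q W α β γ δ) :
    crossProduct p q = (-((β * γ - α * δ) * W)) • n := by
  have : crossProduct p q = (α * δ - β * γ) • crossProduct a b := by
    rw [h.hp, h.hq]
    funext k
    fin_cases k <;> simp [cross_apply] <;> ring
  rw [this, h.hc, smul_smul]
  congr 1; ring

lemma Frame.div_x (h : Frame a b n p q W α β γ δ) :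
    crossProduct b p + crossProduct q a = 0 := by
  rw [h.hp, h.hq, h.tr]
  funext k
  fin_cases k <;> simp [cross_apply] <;> ring

lemma Frame.flux_x0 (h : Frame a b n p q W α β γ δ) :
    (dot3 b b / W) • a + (-dot3 a b / W) • b = crossProduct b n := by
  rw [h.hn]
  have := h.Wpos.ne'
  funext k
  fin_cases k <;> simp [cross_apply, dot3, Fin.sum_univ_three] <;> field_simp <;> ring

lemma Frame.flux_x1 (h : Frame a b n p q W α β γ δ) :
    (-dot3 a b / W) • a + (dot3 a a / W) • b = crossProduct n a := by
  rw [h.hn]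
  have := h.Wpos.ne'
  funext k
  fin_cases k <;> simp [cross_apply, dot3, Fin.sum_univ_three] <;> field_simp <;> ring

lemma Frame.flux_n0 (h : Frame a b n p q W α β γ δ) :
    (dot3 b b / W) • p + (-dot3 a b / W) • q = crossProduct n q := by
  have e : crossProduct n q =
      γ • crossProduct n a - δ • crossProduct b n := by
    rw [h.hq]
    funext k
    fin_cases k <;> simp [cross_apply] <;> ring
  rw [e, ← h.flux_x0, ← h.flux_x1, h.hp, h.hq, h.tr]
  have hs := h.sym
  rw [h.tr] at hs
  have := h.Wpos.ne'
  funext k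
  simp
  field_simp
  linear_combination b k * hs

lemma Frame.flux_n1 (h : Frame a b n p q W α β γ δ) :
    (-dot3 a b / W) • p + (dot3 a a / W) • q = crossProduct p n := by
  have e : crossProduct p n =
      β • crossProduct b n - α • crossProduct n a := by
    rw [h.hp]
    funext k
    fin_cases k <;> simp [cross_apply] <;> ring
  rw [e, ← h.flux_x0, ← h.flux_x1, h.hp, h.hq, h.tr]
  have hs := h.sym
  rw [h.tr] at hs
  have := h.Wpos.ne'
  funext k
  simp
  field_simp
  linear_combination (-a k) * hs

end

lemma norm3_pos {a : Vec3} (h : a ≠ 0) : 0 < norm3 a := Real.sqrt_pos.2 (dot3_pos h)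

lemma norm3_sq (a : Vec3) : norm3 a * norm3 a = dot3 a a :=
  Real.mul_self_sqrt (Finset.sum_nonneg fun i _ => mul_self_nonneg _)

lemma W_cd {U : Set Param} {x : Param → Vec3} (hU : IsOpen U)
    (hx : ContDiffOn ℝ (⊤ : ℕ∞) x U) (himm : Immersed x U) :
    ContDiffOn ℝ (⊤ : ℕ∞) (fun u => (norm3 (crossProduct (pd 0 x u) (pd 1 x u)))⁻¹) U := by
  have hc := cross_cd (pd_cd hU hx 0) (pd_cd hU hx 1)
  have hne : ∀ u ∈ U, crossProduct (pd 0 x u) (pd 1 x u) ≠ 0 := fun u hu =>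
    crossProduct_ne_zero_iff_linearIndependent.2 (himm u hu)
  refine ContDiffOn.inv ?_ fun u hu => (norm3_pos (hne u hu)).ne'
  exact (dot_cd hc hc).sqrt fun u hu => (dot3_pos (hne u hu)).ne'

lemma gauss_cd {U : Set Param} {x : Param → Vec3} (hU : IsOpen U)
    (hx : ContDiffOn ℝ (⊤ : ℕ∞) x U) (himm : Immersed x U) :
    ContDiffOn ℝ (⊤ : ℕ∞) (gaussMap x) U :=
  (W_cd hU hx himm).smul (cross_cd (pd_cd hU hx 0) (pd_cd hU hx 1))

lemma dot_n_x {U : Set Param} {x : Param → Vec3} (u : Param) (j : Fin 2) :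
    dot3 (gaussMap x u) (pd j x u) = 0 := by
  unfold gaussMap
  fin_cases j <;> simp [dot3, cross_apply, Fin.sum_univ_three] <;> ring

lemma fformII_eq {U : Set Param} {x : Param → Vec3} (hU : IsOpen U)
    (hx : ContDiffOn ℝ (⊤ : ℕ∞) x U) (himm : Immersed x U) {u : Param} (hu : u ∈ U)
    (i j : Fin 2) : fformII x u i j = -dot3 (pd i (gaussMap x) u) (pd j x u) := by
  have h1 := pds_const_on hU (f := fun v => dot3 (gaussMap x v) (pd j x v)) (c := 0)
    (fun v _ => dot_n_x (U := U) v j) hu i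
  rw [pds_dot (cd_diff hU (gauss_cd hU hx himm) hu) (cd_diff hU (pd_cd hU hx j) hu)] at h1
  simp only [fformII, Matrix.of_apply]
  rw [dot3_comm]
  linarith

lemma exists_frame {U : Set Param} {x : Param → Vec3} (hU : IsOpen U)
    (hx : ContDiffOn ℝ (⊤ : ℕ∞) x U) (himm : Immersed x U)
    (hpar : ∀ u ∈ U, (fformII x u).det ≠ 0)
    (hmin : ∀ u ∈ U, meanCurv x u = 0) {u : Param} (hu : u ∈ U) :
    ∃ α β γ δ, Frame (pd 0 x u) (pd 1 x u) (gaussMap x u) (pd 0 (gaussMap x) u)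
      (pd 1 (gaussMap x) u) (norm3 (crossProduct (pd 0 x u) (pd 1 x u))) α β γ δ := by
  have hne := crossProduct_ne_zero_iff_linearIndependent.2 (himm u hu)
  have hW := norm3_pos hne
  have hWsq := norm3_sq (crossProduct (pd 0 x u) (pd 1 x u))
  rw [cross_dot_self] at hWsq
  have hc : crossProduct (pd 0 x u) (pd 1 x u) =
      norm3 (crossProduct (pd 0 x u) (pd 1 x u)) • gaussMap x u := by
    unfold gaussMap
    rw [smul_smul, mul_inv_cancel₀ hW.ne', one_smul]
  have hD : dot3 (pd 0 x u) (pd 0 x u) * dot3 (pd 1 x u) (pd 1 x u) -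
      dot3 (pd 0 x u) (pd 1 x u) * dot3 (pd 0 x u) (pd 1 x u) ≠ 0 := by
    rw [← hWsq]; positivity
  have hunit : ∀ v ∈ U, dot3 (gaussMap x v) (gaussMap x v) = 1 := by
    intro v hv
    have hne := crossProduct_ne_zero_iff_linearIndependent.2 (himm v hv)
    have hW := norm3_pos hne
    have hWsq := norm3_sq (crossProduct (pd 0 x v) (pd 1 x v))
    unfold gaussMap
    rw [dot3_smul_right, dot3_comm, dot3_smul_right, ← hWsq]
    field_simp
  have hg := cd_diff hU (gauss_cd hU hx himm) hu
  have horth : ∀ i, dot3 (pd i (gaussMap x) u) (crossProduct (pd 0 x u) (pd 1 x u)) = 0 := by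
    intro i
    have h1 := pds_const_on hU hunit hu i
    rw [pds_dot hg hg, dot3_comm (gaussMap x u)] at h1
    rw [hc, dot3_smul_right]
    have : dot3 (pd i (gaussMap x) u) (gaussMap x u) = 0 := by linarith
    rw [this, mul_zero]
  obtain ⟨α, β, hp⟩ := expand_tangent _ _ _ (horth 0) hD
  obtain ⟨γ, δ, hq⟩ := expand_tangent _ _ _ (horth 1) hD
  have b00 := fformII_eq hU hx himm hu 0 0
  have b01 := fformII_eq hU hx himm hu 0 1
  have b10 := fformII_eq hU hx himm hu 1 0
  have b11 := fformII_eq hU hx himm hu 1 1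
  have hsym : fformII x u 0 1 = fformII x u 1 0 := by
    simp only [fformII, Matrix.of_apply, pd_symm hU hx hu 0 1]
  rw [hp, dot3_comb] at b00 b01
  rw [hq, dot3_comb] at b10 b11
  have hdet := hpar u hu
  have hm := hmin u hu
  rw [Matrix.det_fin_two] at hdet
  simp only [meanCurv, Matrix.inv_def, Matrix.det_fin_two, Matrix.adjugate_fin_two,
    Ring.inverse_eq_inv', Fin.sum_univ_two, Matrix.smul_apply, fformI, Matrix.of_apply] at hm
  simp at hm
  rw [dot3_comm (pd 1 x u) (pd 0 x u)] at hm b00 b10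
  have hsym' : α * dot3 (pd 0 x u) (pd 1 x u) + β * dot3 (pd 1 x u) (pd 1 x u) =
    γ * dot3 (pd 0 x u) (pd 0 x u) + δ * dot3 (pd 0 x u) (pd 1 x u) := by linarith
  have htr : δ = -α := by
    rw [b00, b01, b10, b11, ← hWsq] at hm
    have hW' := hW.ne'
    field_simp at hm
    have : (dot3 (pd 0 x u) (pd 0 x u) * dot3 (pd 1 x u) (pd 1 x u) -
      dot3 (pd 0 x u) (pd 1 x u) * dot3 (pd 0 x u) (pd 1 x u)) * (α + δ) = 0 := by
      linear_combination -hm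
    rcases mul_eq_zero.1 this with h | h
    · exact absurd h hD
    · linarith
  refine ⟨α, β, γ, δ, hW, hWsq, hc, rfl, hp, hq, htr, hsym', ?_⟩
  intro h0
  apply hdet
  rw [b00, b01, b10, b11]
  linear_combination (dot3 (pd 0 x u) (pd 0 x u) * dot3 (pd 1 x u) (pd 1 x u) -
      dot3 (pd 0 x u) (pd 1 x u) * dot3 (pd 0 x u) (pd 1 x u)) * h0

/-- The matrix `√det e · e⁻¹` in terms of the first fundamental form. -/
def Bm (x : Param → Vec3) (u : Param) (i j : Fin 2) : ℝ :=
  (!![dot3 (pd 1 x u) (pd 1 x u), -dot3 (pd 0 x u) (pd 1 x u);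
     -dot3 (pd 0 x u) (pd 1 x u), dot3 (pd 0 x u) (pd 0 x u)] i j) /
    norm3 (crossProduct (pd 0 x u) (pd 1 x u))

lemma Bm_cd {U : Set Param} {x : Param → Vec3} (hU : IsOpen U)
    (hx : ContDiffOn ℝ (⊤ : ℕ∞) x U) (himm : Immersed x U) (i j : Fin 2) :
    ContDiffOn ℝ (⊤ : ℕ∞) (fun u => Bm x u i j) U := by
  have h0 := pd_cd hU hx 0
  have h1 := pd_cd hU hx 1
  have hW := W_cd hU hx himm
  simp only [Bm, div_eq_mul_inv]
  refine ContDiffOn.mul ?_ hW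
  fin_cases i <;> fin_cases j <;> simp
  · exact dot_cd h1 h1
  · exact (dot_cd h0 h1).neg
  · exact (dot_cd h0 h1).neg
  · exact dot_cd h0 h0

lemma sqrt_det {x : Param → Vec3} {u : Param} {n : Vec3} {W α β γ δ : ℝ}
    (h : Frame (pd 0 x u) (pd 1 x u) n (pd 0 (gaussMap x) u)
      (pd 1 (gaussMap x) u) W α β γ δ) :
    Real.sqrt |(fformIII x u).det| = (β * γ - α * δ) * W := by
  have hd : (fformIII x u).det = ((β * γ - α * δ) * W) ^ 2 := by
    rw [Matrix.det_fin_two]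
    simp only [fformIII, Matrix.of_apply]
    rw [dot3_comm (pd 1 (gaussMap x) u) (pd 0 (gaussMap x) u), h.e00, h.e01, h.e11]
    linear_combination -(β * γ - α * δ) ^ 2 * h.Wsq
  rw [hd, abs_of_nonneg (sq_nonneg _), Real.sqrt_sq (mul_pos h.kpos h.Wpos).le]

lemma Bm_eq {x : Param → Vec3} {u : Param} {n : Vec3} {α β γ δ : ℝ}
    (h : Frame (pd 0 x u) (pd 1 x u) n (pd 0 (gaussMap x) u)
      (pd 1 (gaussMap x) u) (norm3 (crossProduct (pd 0 x u) (pd 1 x u))) α β γ δ)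
    (i j : Fin 2) :
    Real.sqrt |(fformIII x u).det| * (fformIII x u)⁻¹ i j = Bm x u i j := by
  have hk := h.kpos.ne'
  have hW := h.Wpos.ne'
  have hd : (fformIII x u).det = ((β * γ - α * δ) *
      norm3 (crossProduct (pd 0 x u) (pd 1 x u))) ^ 2 := by
    rw [Matrix.det_fin_two]
    simp only [fformIII, Matrix.of_apply]
    rw [dot3_comm (pd 1 (gaussMap x) u) (pd 0 (gaussMap x) u), h.e00, h.e01, h.e11]
    linear_combination -(β * γ - α * δ) ^ 2 * h.Wsq
  rw [sqrt_det h, Matrix.inv_def, hd, Ring.inverse_eq_inv', Matrix.adjugate_fin_two,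
    Matrix.smul_apply]
  unfold Bm
  have e00 := h.e00
  have e01 := h.e01
  have e11 := h.e11
  generalize norm3 (crossProduct (pd 0 x u) (pd 1 x u)) = W at *
  generalize hkk : β * γ - α * δ = k at *
  fin_cases i <;> fin_cases j <;> simp [fformIII]
  · rw [e11]; field_simp
  · rw [e01]; field_simp
  · rw [dot3_comm, e01]; field_simp
  · rw [e00]; field_simp

lemma main_calc {U : Set Param} {x : Param → Vec3} (hU : IsOpen U)
    (hx : ContDiffOn ℝ (⊤ : ℕ∞) x U) (himm : Immersed x U)
    (hpar : ∀ u ∈ U, (fformII x u).det ≠ 0)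
    (hmin : ∀ u ∈ U, meanCurv x u = 0) (s t : ℝ) {u : Param} (hu : u ∈ U) :
    beltrami2 (fformIII x) (fun v => s • x v + t • gaussMap x v) u =
      (2 * t) • gaussMap x u := by
  have hn := gauss_cd hU hx himm
  have hx0 := pd_cd hU hx 0
  have hx1 := pd_cd hU hx 1
  have hn0 := pd_cd hU hn 0
  have hn1 := pd_cd hU hn 1
  set f : Param → Vec3 := fun v => s • x v + t • gaussMap x v with hf
  have hfc : ContDiffOn ℝ (⊤ : ℕ∞) f U := (hx.const_smul s).add (hn.const_smul t)
  have hfd : ∀ v ∈ U, ∀ j, pd j f v = s • pd j x v + t • pd j (gaussMap x) v := by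
    intro v hv j
    have d1 := cd_diff hU hx hv
    have d2 := cd_diff hU hn hv
    rw [hf, pd_add (d1.fun_const_smul s) (d2.fun_const_smul t), pd_smul s d1, pd_smul t d2]
  have step : ∀ i j, pd i (fun v => (Real.sqrt |(fformIII x v).det| * (fformIII x v)⁻¹ i j) •
      pd j f v) u = pd i (fun v => Bm x v i j • pd j f v) u := by
    intro i j
    refine pd_congr hU (fun v hv => ?_) hu i
    obtain ⟨α, β, γ, δ, h⟩ := exists_frame hU hx himm hpar hmin hv
    rw [Bm_eq h]
  have hdiff : ∀ i j, DifferentiableAt ℝ (fun v => Bm x v i j • pd j f v) u := fun i j =>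
    cd_diff hU ((Bm_cd hU hx himm i j).smul (pd_cd hU hfc j)) hu
  unfold beltrami2
  simp only [step, Fin.sum_univ_two]
  rw [← pd_add (hdiff 0 0) (hdiff 0 1), ← pd_add (hdiff 1 0) (hdiff 1 1)]
  have f0 : pd 0 (fun v => Bm x v 0 0 • pd 0 f v + Bm x v 0 1 • pd 1 f v) u =
      pd 0 (fun v => s • crossProduct (pd 1 x v) (gaussMap x v) +
        t • crossProduct (gaussMap x v) (pd 1 (gaussMap x) v)) u := by
    refine pd_congr hU (fun v hv => ?_) hu 0
    obtain ⟨α, β, γ, δ, h⟩ := exists_frame hU hx himm hpar hmin hv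
    rw [← h.flux_x0, ← h.flux_n0, hfd v hv, hfd v hv]
    simp only [Bm]
    simp
    module
  have f1 : pd 1 (fun v => Bm x v 1 0 • pd 0 f v + Bm x v 1 1 • pd 1 f v) u =
      pd 1 (fun v => s • crossProduct (gaussMap x v) (pd 0 x v) +
        t • crossProduct (pd 0 (gaussMap x) v) (gaussMap x v)) u := by
    refine pd_congr hU (fun v hv => ?_) hu 1
    obtain ⟨α, β, γ, δ, h⟩ := exists_frame hU hx himm hpar hmin hv
    rw [← h.flux_x1, ← h.flux_n1, hfd v hv, hfd v hv]
    simp only [Bm]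
    simp
    module
  rw [f0, f1]
  have c1 := cd_diff hU (cross_cd hx1 hn) hu
  have c2 := cd_diff hU (cross_cd hn hn1) hu
  have c3 := cd_diff hU (cross_cd hn hx0) hu
  have c4 := cd_diff hU (cross_cd hn0 hn) hu
  have dn := cd_diff hU hn hu
  have dx0 := cd_diff hU hx0 hu
  have dx1 := cd_diff hU hx1 hu
  have dn0 := cd_diff hU hn0 hu
  have dn1 := cd_diff hU hn1 hu
  rw [pd_add (c1.fun_const_smul s) (c2.fun_const_smul t), pd_smul s c1, pd_smul t c2,
    pd_add (c3.fun_const_smul s) (c4.fun_const_smul t), pd_smul s c3, pd_smul t c4,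
    pd_cross dx1 dn, pd_cross dn dn1, pd_cross dn dx0, pd_cross dn0 dn,
    pd_symm hU hx hu 1 0, pd_symm hU hn hu 1 0]
  obtain ⟨α, β, γ, δ, h⟩ := exists_frame hU hx himm hpar hmin hu
  rw [sqrt_det h]
  have hk := h.kpos.ne'
  have hW := h.Wpos.ne'
  have hcd := h.cross_pq
  have hdx := h.div_x
  rw [← cross_anticomm (gaussMap x u) (pd 0 (pd 1 x) u),
    ← cross_anticomm (gaussMap x u) (pd 0 (pd 1 (gaussMap x)) u), hcd]
  have hdx' := eq_neg_of_add_eq_zero_left hdx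
  rw [hdx']
  generalize norm3 (crossProduct (pd 0 x u) (pd 1 x u)) = W at *
  generalize β * γ - α * δ = k at *
  clear hcd hdx hdx'
  generalize crossProduct (gaussMap x u) (pd 0 (pd 1 x) u) = P
  generalize crossProduct (gaussMap x u) (pd 0 (pd 1 (gaussMap x)) u) = Q
  generalize crossProduct (pd 1 (gaussMap x) u) (pd 0 x u) = R
  funext i
  simp
  field_simp
  ring

/-- Theorem 4.3: if `M` is minimal without parabolic points, then every
parallel surface `x* = x + ρ n` of `M` is of null III-type 2 with respect to the common
third fundamental form: `x* = x + (ρ n)` with `Δ^{III} x = 0`, `Δ^{III}(ρ n) = 2(ρ n)`,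
both summands nonconstant, and `x*` is not of null III-type 1 (`Δ^{III} x* ≠ 0`). -/
theorem stmt18 (U : Set Param) (x : Param → Vec3)
    (hU : IsOpen U) (hUconn : IsConnected U)
    (hx : ContDiffOn ℝ (⊤ : ℕ∞) x U) (himm : Immersed x U)
    (hpar : ∀ u ∈ U, (fformII x u).det ≠ 0)
    (hmin : ∀ u ∈ U, meanCurv x u = 0)
    (ρ : ℝ) (hρ : ρ ≠ 0)
    (hreg : ∀ u ∈ U, 1 + ρ ^ 2 * gaussCurv x u ≠ 0) :
    (∀ u ∈ U, beltrami2 (fformIII x) x u = 0) ∧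
    (∀ u ∈ U, beltrami2 (fformIII x) (fun v => ρ • gaussMap x v) u =
      (2 : ℝ) • (ρ • gaussMap x u)) ∧
    NonconstOn x U ∧
    NonconstOn (fun v => ρ • gaussMap x v) U ∧
    ¬ (∀ u ∈ U, beltrami2 (fformIII x) (fun v => x v + ρ • gaussMap x v) u = 0) := by
  have hmc := fun s t u hu => main_calc hU hx himm hpar hmin s t (u := u) hu
  obtain ⟨u0, hu0⟩ := hUconn.nonempty
  have hnz : gaussMap x u0 ≠ 0 := by
    intro h0
    obtain ⟨α, β, γ, δ, h⟩ := exists_frame hU hx himm hpar hmin hu0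
    have hc := h.hc
    rw [h0, smul_zero] at hc
    exact crossProduct_ne_zero_iff_linearIndependent.2 (himm u0 hu0) hc
  have h2 : ∀ u ∈ U, beltrami2 (fformIII x) (fun v => ρ • gaussMap x v) u =
      (2 : ℝ) • (ρ • gaussMap x u) := by
    intro u hu
    have := hmc 0 ρ u hu
    simpa [smul_smul] using this
  refine ⟨?_, h2, ?_, ?_, ?_⟩
  · intro u hu
    have := hmc 1 0 u hu
    simpa using this
  · rintro ⟨c, hc⟩
    apply crossProduct_ne_zero_iff_linearIndependent.2 (himm u0 hu0)
    rw [pd_const_on hU hc hu0 0]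
    simp
  · rintro ⟨c, hc⟩
    apply hpar u0 hu0
    have d := cd_diff hU (gauss_cd hU hx himm) hu0
    have hz : ∀ i, pd i (gaussMap x) u0 = 0 := by
      intro i
      have := pd_const_on hU hc hu0 i
      rw [pd_smul ρ d] at this
      exact (smul_eq_zero.1 this).resolve_left hρ
    rw [Matrix.det_fin_two]
    simp only [fformII_eq hU hx himm hu0, hz]
    simp [dot3]
  · intro h
    have h1 := h u0 hu0
    have h3 := hmc 1 ρ u0 hu0
    simp only [one_smul] at h3
    rw [h1] at h3
    rcases smul_eq_zero.1 h3.symm with h4 | h4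
    · exact hρ (by linarith)
    · exact hnz h4
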